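/- Equip X = ℤ × ℤ × ℤ, with componentwise addition, with the multiplication (a,α,β)·(b,γ,δ) = (0, aδ + bβ + αγ, aγ + bα), making X a non-unital non-associative ring, and let G = { (a,α,β) ∈ X | a = 0 }, a two-sided ideal of X. Then: (1) the additive subgroup Z = { (a,α,β) ∈ X | a = 0 and α = 0 } equals the annihilator of G in G, i.e. Z = { g ∈ G | g·g' = 0 and g'·g = 0 for all g' ∈ G } (the centre of G in the category of non-unital non-associative rings); (2) Z is a two-sided ideal of G; (3) Z is not a two-sided ideal of X: for x = (1,0,0) and z = (0,0,1) ∈ Z one has x·z = (0,1,0) ∉ Z. Hence in the semi-abelian category of non-unital non-associative rings the centre Z(G) need not be characteristic in G. -/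

import Mathlib

/-- The multiplication `(a,α,β)·(b,γ,δ) = (0, aδ + bβ + αγ, aγ + bα)` on `ℤ × ℤ × ℤ`. -/
def mulX (x y : ℤ × ℤ × ℤ) : ℤ × ℤ × ℤ :=
  (0, x.1 * y.2.2 + y.1 * x.2.2 + x.2.1 * y.2.1, x.1 * y.2.1 + y.1 * x.2.1)

/-- The additive subgroup `G = { (a,α,β) | a = 0 }` of `X = ℤ × ℤ × ℤ`. -/
def Gsub : AddSubgroup (ℤ × ℤ × ℤ) where
  carrier := {p | p.1 = 0}
  zero_mem' := rfl
  add_mem' := by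
    intro a b ha hb
    simp only [Set.mem_setOf_eq, Prod.fst_add] at *
    omega
  neg_mem' := by
    intro a ha
    simp only [Set.mem_setOf_eq, Prod.fst_neg] at *
    omega

/-- The additive subgroup `Z = { (a,α,β) | a = 0 ∧ α = 0 }` of `X = ℤ × ℤ × ℤ`. -/
def Zsub : AddSubgroup (ℤ × ℤ × ℤ) where
  carrier := {p | p.1 = 0 ∧ p.2.1 = 0}
  zero_mem' := ⟨rfl, rfl⟩
  add_mem' := by
    intro a b ha hb
    simp only [Set.mem_setOf_eq, Prod.fst_add, Prod.snd_add] at *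
    omega
  neg_mem' := by
    intro a ha
    simp only [Set.mem_setOf_eq, Prod.fst_neg, Prod.snd_neg] at *
    omega

/-!
The product is commutative, so only left multiplication matters. On `G` it reads
`(0,α,β)·(0,γ,δ) = (0,αγ,0)`, so an element that annihilates `(0,1,0)` has `α = 0`, and the
annihilator of `G` is the `β`-axis `Z`. Since `Z` annihilates `G`, it is an ideal of `G`; but left
multiplication by `(1,0,0)` interchanges the two axes of `G`, hence moves `Z` out of itself.
-/

theorem mem_Gsub {p : ℤ × ℤ × ℤ} : p ∈ Gsub ↔ p.1 = 0 := Iff.rfl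

theorem mem_Zsub {p : ℤ × ℤ × ℤ} : p ∈ Zsub ↔ p.1 = 0 ∧ p.2.1 = 0 := Iff.rfl

theorem Zsub_le_Gsub : Zsub ≤ Gsub := fun _ hz => mem_Gsub.2 (mem_Zsub.1 hz).1

theorem mulX_comm (x y : ℤ × ℤ × ℤ) : mulX x y = mulX y x := by
  ext <;> simp only [mulX] <;> ring

theorem mulX_add (x y z : ℤ × ℤ × ℤ) : mulX x (y + z) = mulX x y + mulX x z := by
  ext <;> simp only [mulX, Prod.fst_add, Prod.snd_add] <;> ring

theorem add_mulX (x y z : ℤ × ℤ × ℤ) : mulX (x + y) z = mulX x z + mulX y z := by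
  rw [mulX_comm, mulX_add, mulX_comm z x, mulX_comm z y]

theorem mulX_mem_Gsub (x y : ℤ × ℤ × ℤ) : mulX x y ∈ Gsub := mem_Gsub.2 rfl

theorem mulX_of_mem_Gsub {g h : ℤ × ℤ × ℤ} (hg : g ∈ Gsub) (hh : h ∈ Gsub) :
    mulX g h = (0, g.2.1 * h.2.1, 0) := by
  simp [mulX, mem_Gsub.1 hg, mem_Gsub.1 hh]

theorem mulX_eq_zero_iff_of_mem_Gsub {g h : ℤ × ℤ × ℤ} (hg : g ∈ Gsub) (hh : h ∈ Gsub) :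
    mulX g h = 0 ↔ g.2.1 = 0 ∨ h.2.1 = 0 := by
  simp [mulX_of_mem_Gsub hg hh]

theorem mulX_eq_zero_of_mem_Gsub_of_mem_Zsub {g z : ℤ × ℤ × ℤ} (hg : g ∈ Gsub) (hz : z ∈ Zsub) :
    mulX g z = 0 :=
  (mulX_eq_zero_iff_of_mem_Gsub hg (Zsub_le_Gsub hz)).2 (Or.inr (mem_Zsub.1 hz).2)

theorem mem_Zsub_iff_forall_mulX_eq_zero {z : ℤ × ℤ × ℤ} (hz : z ∈ Gsub) :
    z ∈ Zsub ↔ ∀ g ∈ Gsub, mulX g z = 0 := by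
  refine ⟨fun hzZ g hg => mulX_eq_zero_of_mem_Gsub_of_mem_Zsub hg hzZ, fun h => ?_⟩
  have he : ((0, 1, 0) : ℤ × ℤ × ℤ) ∈ Gsub := mem_Gsub.2 rfl
  have hz₀ : z.2.1 = 0 :=
    ((mulX_eq_zero_iff_of_mem_Gsub he hz).1 (h _ he)).resolve_left one_ne_zero
  exact mem_Zsub.2 ⟨mem_Gsub.1 hz, hz₀⟩

theorem coe_Zsub_eq_annihilator :
    (Zsub : Set (ℤ × ℤ × ℤ)) =
      {g | g ∈ Gsub ∧ ∀ g' ∈ Gsub, mulX g g' = 0 ∧ mulX g' g = 0} := by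
  ext z
  simp only [SetLike.mem_coe, Set.mem_ofPred_eq, mulX_comm z, and_self]
  rw [← and_congr_right mem_Zsub_iff_forall_mulX_eq_zero]
  exact (and_iff_right_of_imp (@Zsub_le_Gsub z)).symm

theorem mulX_mem_Zsub {g z : ℤ × ℤ × ℤ} (hg : g ∈ Gsub) (hz : z ∈ Zsub) : mulX g z ∈ Zsub := by
  rw [mulX_eq_zero_of_mem_Gsub_of_mem_Zsub hg hz]
  exact zero_mem Zsub

theorem mulX_one_zero_zero_swap (α β : ℤ) : mulX (1, 0, 0) (0, α, β) = (0, β, α) := by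
  simp [mulX]

/-- The centre `Z(G)` of the non-unital non-associative ring `G` inside `X = ℤ ⋉ G`
is an ideal of `G` but not an ideal of `X`. -/
theorem center_not_characteristic :
    -- the ambient structure: `mulX` is left and right distributive and `G` is an ideal of `X`
    (∀ x y z : ℤ × ℤ × ℤ,
      mulX x (y + z) = mulX x y + mulX x z ∧ mulX (x + y) z = mulX x z + mulX y z) ∧
    (∀ x : ℤ × ℤ × ℤ, ∀ g ∈ Gsub, mulX x g ∈ Gsub ∧ mulX g x ∈ Gsub) ∧
    -- (1) `Z` is the two-sided annihilator (centre) of `G` in `G`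
    ((Zsub : Set (ℤ × ℤ × ℤ)) =
      {g | g ∈ Gsub ∧ ∀ g' ∈ Gsub, mulX g g' = 0 ∧ mulX g' g = 0}) ∧
    -- (2) `Z` is a two-sided ideal of `G`
    (∀ g ∈ Gsub, ∀ z ∈ Zsub, mulX g z ∈ Zsub ∧ mulX z g ∈ Zsub) ∧
    -- (3) `Z` is not a two-sided ideal of `X`
    (mulX ((1 : ℤ), (0 : ℤ), (0 : ℤ)) ((0 : ℤ), (0 : ℤ), (1 : ℤ)) =
        ((0 : ℤ), (1 : ℤ), (0 : ℤ)) ∧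
      ((0 : ℤ), (0 : ℤ), (1 : ℤ)) ∈ Zsub ∧
      ((0 : ℤ), (1 : ℤ), (0 : ℤ)) ∉ Zsub ∧
      ¬ (∀ x : ℤ × ℤ × ℤ, ∀ z ∈ Zsub, mulX x z ∈ Zsub ∧ mulX z x ∈ Zsub)) := by
  have hz : ((0, 0, 1) : ℤ × ℤ × ℤ) ∈ Zsub := mem_Zsub.2 ⟨rfl, rfl⟩
  have hxz : ((0, 1, 0) : ℤ × ℤ × ℤ) ∉ Zsub := fun h => one_ne_zero (mem_Zsub.1 h).2
  refine ⟨fun x y z => ⟨mulX_add x y z, add_mulX x y z⟩,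
    fun x g _ => ⟨mulX_mem_Gsub x g, mulX_mem_Gsub g x⟩,
    coe_Zsub_eq_annihilator,
    fun g hg z hz => ⟨mulX_mem_Zsub hg hz, mulX_comm g z ▸ mulX_mem_Zsub hg hz⟩,
    mulX_one_zero_zero_swap 0 1, hz, hxz, fun hideal => hxz ?_⟩
  rw [← mulX_one_zero_zero_swap 0 1]
  exact (hideal _ _ hz).1
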